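/- arXiv:1902.02630 — 2 statements merged into one kernel-verified Lean document; each statement's English description precedes it below -/
import Mathlib

section
/- Let R → S be a ring homomorphism such that the induced morphism Spec S → Spec R is universally injective (equivalently: Spec S → Spec R is injective on points and for every prime q of S lying over p in R, the residue field extension κ(p) ⊆ κ(q) is purely inseparable). Then every element of the kernel of the multiplication map S ⊗_R S → S, s ⊗ s' ↦ s s', is nilpotent; that is, ker(S ⊗_R S → S) is contained in the nilradical of S ⊗_R S. -/
/-!
STATEMENT 2: Let R → S be a ring homomorphism such that the induced morphism
Spec S → Spec R is universally injective.  Then every element of the kernel of the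
multiplication map S ⊗_R S → S, s ⊗ s' ↦ s s', is nilpotent; that is,
ker(S ⊗_R S → S) is contained in the nilradical of S ⊗_R S.
-/

open CategoryTheory AlgebraicGeometry TensorProduct

theorem ker_mul_le_nilradical_of_universallyInjective
    (R S : Type) [CommRing R] [CommRing S] [Algebra R S]
    (h : UniversallyInjective (Spec.map (CommRingCat.ofHom (algebraMap R S))))
    (x : S ⊗[R] S) (hx : x ∈ RingHom.ker (Algebra.TensorProduct.lmul' R (S := S)).toRingHom) :
    IsNilpotent x := by
  rw [UniversallyInjective.iff_diagonal, diagonal_SpecMap R S,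
    MorphismProperty.cancel_right_of_respectsIso @Surjective] at h
  rw [← mem_nilradical, nilradical_eq_sInf, Ideal.mem_sInf]
  intro J hJ
  obtain ⟨q, hq⟩ := h.surj (⟨J, hJ⟩ : PrimeSpectrum (S ⊗[R] S))
  have hq' : Ideal.comap (Algebra.TensorProduct.lmul' R (S := S)).toRingHom q.asIdeal = J :=
    congrArg PrimeSpectrum.asIdeal hq
  rw [← hq', Ideal.mem_comap, RingHom.mem_ker.mp hx]
  exact q.asIdeal.zero_mem
end

section
/- Let p ≥ 5 be a prime, let c ∈ F_p^× be a non-square, and let a ∈ F_p^× with 27a ≠ 16 in F_p. Let F := w(x³ + y³ + z³ + (t + a(1−t))w³) + (t z² + x y + t y z)² − (c − t) t² y² z², a homogeneous polynomial of degree 4 in x, y, z, w with coefficients in F_p[t]. Let K = F_p((t)) be the field of formal Laurent series and let X ⊆ P³_K be the closed subscheme of projective 3-space over K defined by the image of F under F_p[t] → K. Then X is smooth over K (hence X is a smooth quartic surface, a K3 surface, over F_p((t))). -/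
/-!
STATEMENT 8: Let p ≥ 5 be a prime, let c ∈ F_p^× be a non-square, and let a ∈ F_p^×
with 27a ≠ 16 in F_p.  Let
  F := w(x³ + y³ + z³ + (t + a(1−t))w³) + (t z² + x y + t y z)² − (c − t) t² y² z²,
a homogeneous polynomial of degree 4 in x, y, z, w with coefficients in F_p[t].
Let K = F_p((t)) be the field of formal Laurent series (the fraction field of F_p[[t]])
and let X ⊆ P³_K be the closed subscheme defined by the image of F under F_p[t] → K.
Then X is smooth over K.

Here smoothness of `X = V₊(F) ⊆ P³_K` is expressed on the standard affine charts:
`X ∩ D₊(xᵢ) = Spec (K[x,y,z,w]/(F, xᵢ − 1))`, and these four charts cover `X`.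
-/

open MvPolynomial

noncomputable section

/-- The quartic `F ∈ F_p[t][x,y,z,w]` (variables `X 0 = x`, `X 1 = y`, `X 2 = z`, `X 3 = w`). -/
def Fquartic (p : ℕ) (c a : ZMod p) : MvPolynomial (Fin 4) (Polynomial (ZMod p)) :=
  X 3 * (X 0 ^ 3 + X 1 ^ 3 + X 2 ^ 3 +
      C (Polynomial.X + Polynomial.C a * (1 - Polynomial.X)) * X 3 ^ 3) +
    (C Polynomial.X * X 2 ^ 2 + X 0 * X 1 + C Polynomial.X * X 1 * X 2) ^ 2 -
    C ((Polynomial.C c - Polynomial.X) * Polynomial.X ^ 2) * X 1 ^ 2 * X 2 ^ 2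

/-- The image of `F` in `K[x,y,z,w]`, where `K` is the Laurent series field `F_p((t))`,
realised as the fraction field of `F_p[[t]]`; the map `F_p[t] → K` sends `t` to the image of
`PowerSeries.X`. -/
def FquarticK (p : ℕ) (K : Type) [Field K] [Algebra (PowerSeries (ZMod p)) K]
    (c a : ZMod p) : MvPolynomial (Fin 4) K :=
  MvPolynomial.map
    ((algebraMap (PowerSeries (ZMod p)) K).comp (Polynomial.coeToPowerSeries.ringHom))
    (Fquartic p c a)

section core
variable {L : Type*} [Field L] {Γ : Type*} [LinearOrderedCommGroupWithZero Γ] (v : Valuation L Γ)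

lemma core_small_add {τ : Γ} {r s : L} (hr : v r ^ 2 ≤ τ) (hs : v s ^ 2 ≤ τ) :
    v (r + s) ^ 2 ≤ τ := by
  rcases le_max_iff.1 (v.map_add r s) with h | h
  · exact (pow_le_pow_left₀ zero_le h 2).trans hr
  · exact (pow_le_pow_left₀ zero_le h 2).trans hs

lemma core_small_mul {τ : Γ} {r s : L} (hr : v r ≤ 1) (hs : v s ^ 2 ≤ τ) :
    v (r * s) ^ 2 ≤ τ := by
  rw [map_mul, mul_pow]
  calc v r ^ 2 * v s ^ 2 ≤ 1 * v s ^ 2 := by gcongr; exact pow_le_one₀ zero_le hr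
    _ ≤ τ := by simpa

lemma core_int_add {r s : L} (hr : v r ≤ 1) (hs : v s ≤ 1) : v (r + s) ≤ 1 := v.map_add_le hr hs

lemma core_int_mul {r s : L} (hr : v r ≤ 1) (hs : v s ≤ 1) : v (r * s) ≤ 1 := by
  rw [map_mul]; exact mul_le_one' hr hs

lemma core_int_pow {r : L} (hr : v r ≤ 1) (n : ℕ) : v (r ^ n) ≤ 1 := by
  rw [map_pow]; exact pow_le_one₀ zero_le hr

/-- No singular point with integral coordinates. -/
lemma core_integral (h2 : v 2 = 1) (h3 : v 3 = 1) {t e b x y z Q : L}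
    (he : v e = 1) (hb : v b = 1) (ht : v t < 1)
    (hx : v x ≤ 1) (hy : v y ≤ 1) (hz : v z ≤ 1)
    (hQ : Q = t * z ^ 2 + x * y + t * y * z)
    (e1 : 3 * x ^ 2 + 2 * Q * y = 0)
    (e2 : 3 * y ^ 2 + 2 * Q * (x + t * z) - 2 * e * t ^ 2 * y * z ^ 2 = 0)
    (e3 : 3 * z ^ 2 + 2 * t * Q * (2 * z + y) - 2 * e * t ^ 2 * y ^ 2 * z = 0)
    (e5 : Q ^ 2 = 3 * b + e * t ^ 2 * y ^ 2 * z ^ 2) :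
    v (27 - 16 * b) ^ 2 ≤ v t ^ 3 := by
  have ht1 := ht.le
  have i2 := h2.le
  have i3 := h3.le
  have ie := he.le
  have ib := hb.le
  have in1 : v (-1) ≤ 1 := by simp
  have iQ : v Q ≤ 1 := by
    rw [hQ]
    repeat' first | assumption | apply core_int_add | apply core_int_mul | apply core_int_pow
  have hzz : v z ^ 2 ≤ v t := by
    have : 3 * z ^ 2 = t * (-1 * 2 * Q * (2 * z + y) + 2 * e * t * y ^ 2 * z) := by
      linear_combination e3
    have h := congrArg v this
    rw [map_mul, map_mul, map_pow, h3, one_mul] at h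
    rw [h]
    refine mul_le_of_le_one_right zero_le ?_
    repeat' first | assumption | apply core_int_add | apply core_int_mul | apply core_int_pow
  have stz : v (t * z) ^ 2 ≤ v t ^ 3 := by
    rw [map_mul, mul_pow, pow_succ (v t) 2]; gcongr
  have stt : v (t ^ 2) ^ 2 ≤ v t ^ 3 := by
    rw [map_pow, ← pow_mul]; exact pow_le_pow_of_le_one zero_le ht1 (by norm_num)
  have szzz : v (z ^ 3) ^ 2 ≤ v t ^ 3 := by
    rw [map_pow, ← pow_mul, mul_comm, pow_mul]; gcongr
  have div_unit : ∀ u r : L, v u = 1 → v (u * r) ^ 2 ≤ v t ^ 3 → v r ^ 2 ≤ v t ^ 3 := by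
    intro u r hu h
    rwa [map_mul, hu, one_mul] at h
  have s1 : v (Q - x * y) ^ 2 ≤ v t ^ 3 := by
    have : Q - x * y = (z + y) * (t * z) := by rw [hQ]; ring
    rw [this]
    exact core_small_mul v (core_int_add v hz hy) stz
  have s2 : v (3 * x ^ 2 + 2 * x * y ^ 2) ^ 2 ≤ v t ^ 3 := by
    have : 3 * x ^ 2 + 2 * x * y ^ 2 = (-1 * 2 * y) * (Q - x * y) := by linear_combination e1
    rw [this]
    refine core_small_mul v ?_ s1
    repeat' first | assumption | apply core_int_add | apply core_int_mul | apply core_int_pow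
  have s3 : v (3 * y ^ 2 + 2 * x ^ 2 * y) ^ 2 ≤ v t ^ 3 := by
    have : 3 * y ^ 2 + 2 * x ^ 2 * y = (-1 * 2 * x) * (Q - x * y) + (-1 * 2 * Q) * (t * z)
        + (2 * e * y * z ^ 2) * t ^ 2 := by linear_combination e2
    rw [this]
    refine core_small_add v (core_small_add v (core_small_mul v ?_ s1) (core_small_mul v ?_ stz))
      (core_small_mul v ?_ stt)
    all_goals
    repeat' first | assumption | apply core_int_add | apply core_int_mul | apply core_int_pow
  have s5 : v (x ^ 2 * y ^ 2 - 3 * b) ^ 2 ≤ v t ^ 3 := by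
    have : x ^ 2 * y ^ 2 - 3 * b = (-1 * (Q + x * y)) * (Q - x * y) + (e * y ^ 2 * z ^ 2) * t ^ 2 := by
      linear_combination e5
    rw [this]
    refine core_small_add v (core_small_mul v ?_ s1) (core_small_mul v ?_ stt)
    all_goals
    repeat' first | assumption | apply core_int_add | apply core_int_mul | apply core_int_pow
  have s6 : v (x ^ 3 + 2 * b) ^ 2 ≤ v t ^ 3 := by
    refine div_unit 3 _ h3 ?_
    have : 3 * (x ^ 3 + 2 * b) = x * (3 * x ^ 2 + 2 * x * y ^ 2)
      + (-1 * 2) * (x ^ 2 * y ^ 2 - 3 * b) := by ring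
    rw [this]
    refine core_small_add v (core_small_mul v hx s2) (core_small_mul v ?_ s5)
    repeat' first | assumption | apply core_int_add | apply core_int_mul | apply core_int_pow
  have s7 : v (y ^ 3 + 2 * b) ^ 2 ≤ v t ^ 3 := by
    refine div_unit 3 _ h3 ?_
    have : 3 * (y ^ 3 + 2 * b) = y * (3 * y ^ 2 + 2 * x ^ 2 * y)
      + (-1 * 2) * (x ^ 2 * y ^ 2 - 3 * b) := by ring
    rw [this]
    refine core_small_add v (core_small_mul v hy s3) (core_small_mul v ?_ s5)
    repeat' first | assumption | apply core_int_add | apply core_int_mul | apply core_int_pow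
  have s8 : v (3 * x * y - 2 * 2 * b) ^ 2 ≤ v t ^ 3 := by
    refine div_unit b _ hb ?_
    have : b * (3 * x * y - 2 * 2 * b) = y ^ 3 * (x ^ 3 + 2 * b) + (-1 * 2 * b) * (y ^ 3 + 2 * b)
      + (-1 * x * y) * (x ^ 2 * y ^ 2 - 3 * b) := by ring
    rw [this]
    refine core_small_add v (core_small_add v (core_small_mul v ?_ s6) (core_small_mul v ?_ s7))
      (core_small_mul v ?_ s5)
    all_goals
    repeat' first | assumption | apply core_int_add | apply core_int_mul | apply core_int_pow
  refine div_unit b _ hb ?_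
  have : b * (27 - 16 * b) = (3 * x * y + 2 * 2 * b) * (3 * x * y - 2 * 2 * b)
      + (-1 * 3 * 3) * (x ^ 2 * y ^ 2 - 3 * b) := by ring
  rw [this]
  refine core_small_add v (core_small_mul v ?_ s8) (core_small_mul v ?_ s5)
  all_goals
  repeat' first | assumption | apply core_int_add | apply core_int_mul | apply core_int_pow

/-- All singular points in the chart `w = 1` are integral. -/
lemma core_nonintegral (h2 : v 2 = 1) (h3 : v 3 = 1) {t e b x y z Q : L}
    (he : v e = 1) (hb : v b = 1) (ht : v t < 1)
    (hQ : Q = t * z ^ 2 + x * y + t * y * z)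
    (e1 : 3 * x ^ 2 + 2 * Q * y = 0)
    (e2 : 3 * y ^ 2 + 2 * Q * (x + t * z) - 2 * e * t ^ 2 * y * z ^ 2 = 0)
    (e4 : x ^ 3 + y ^ 3 + z ^ 3 + 4 * b = 0)
    (e5 : Q ^ 2 = 3 * b + e * t ^ 2 * y ^ 2 * z ^ 2) :
    v x ≤ 1 ∧ v y ≤ 1 ∧ v z ≤ 1 := by
  by_contra hcon
  obtain ⟨m, hm, hxm, hym, hzm, hex⟩ : ∃ m : Γ, 1 < m ∧ v x ≤ m ∧ v y ≤ m ∧ v z ≤ m ∧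
      (v x = m ∨ v y = m ∨ v z = m) := by
    refine ⟨max (v x) (max (v y) (v z)), ?_, by simp, by simp, by simp, ?_⟩
    · by_contra h
      exact hcon (by simpa using h)
    · rcases max_choice (v y) (v z) with h | h <;> rw [h]
      · rcases max_choice (v x) (v y) with h | h <;> rw [h] <;> simp
      · rcases max_choice (v x) (v z) with h | h <;> rw [h] <;> simp
  have hm0 : 0 < m := lt_trans one_pos hm
  have v4b : v (4 * b) = 1 := by
    have : (4 * b : L) = 2 * 2 * b := by ring
    rw [this]; simp [h2, hb]
  have v3b : v (3 * b) = 1 := by simp [h3, hb]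
  have hm2 : 1 < m ^ 2 := one_lt_pow₀ hm (by norm_num)
  have hm3 : 1 < m ^ 3 := one_lt_pow₀ hm (by norm_num)
  have hm4 : 1 < m ^ 4 := one_lt_pow₀ hm (by norm_num)
  have hmm : m < m ^ 2 := by rw [pow_two]; exact lt_mul_of_one_lt_left hm0 hm
  have hmmm : m ^ 2 < m ^ 3 := pow_lt_pow_right₀ hm (by norm_num)
  -- size of `e t² y² z²`
  have vE : v (e * t ^ 2 * y ^ 2 * z ^ 2) = v t ^ 2 * v y ^ 2 * v z ^ 2 := by simp [he]
  have ht2 : v t ^ 2 < 1 := pow_lt_one₀ zero_le ht (by norm_num)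
  have hQm : v Q < m ^ 2 := by
    have : v Q ^ 2 < (m ^ 2) ^ 2 := by
      rw [← map_pow, e5]
      refine v.map_add_lt (by rw [v3b, ← pow_mul]; exact hm4) ?_
      rw [vE]
      calc v t ^ 2 * v y ^ 2 * v z ^ 2 ≤ v t ^ 2 * m ^ 2 * m ^ 2 := by gcongr
        _ = v t ^ 2 * m ^ 4 := by rw [mul_assoc, ← pow_add]
        _ < 1 * m ^ 4 := mul_lt_mul_of_pos_right ht2 (lt_trans one_pos hm4)
        _ = (m ^ 2) ^ 2 := by rw [one_mul, ← pow_mul]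
    exact lt_of_pow_lt_pow_left₀ 2 zero_le this
  have hxy : v x * v y < m ^ 2 := by
    have : x * y = Q - t * (z * (z + y)) := by rw [hQ]; ring
    rw [← map_mul, this]
    refine v.map_sub_lt hQm ?_
    rw [map_mul, map_mul]
    calc v t * (v z * v (z + y)) ≤ v t * (m * m) := by gcongr; exact v.map_add_le hzm hym
      _ < 1 * (m * m) := by gcongr
      _ = m ^ 2 := by rw [one_mul, pow_two]
  have hc : ∀ u, v u < m → v (u ^ 3) < m ^ 3 := fun u hu => by
    rw [map_pow]; exact pow_lt_pow_left₀ hu zero_le (by norm_num)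
  have h4b : v (4 * b) < m ^ 3 := by rwa [v4b]
  have hc' : ∀ u, v (u ^ 3) < m ^ 3 → v u < m := fun u hu => by
    rw [map_pow] at hu; exact lt_of_pow_lt_pow_left₀ 3 zero_le hu
  have q1 : v x ^ 2 = v Q * v y := by
    have : 3 * x ^ 2 = -(2 * Q * y) := by linear_combination e1
    simpa [h2, h3] using congrArg v this
  have hcases : (v x = m ∧ v y < m ∧ v z = m) ∨ (v x < m ∧ v y = m ∧ v z = m) := by
    rcases hxm.lt_or_eq with hx | hx
    · right
      refine ⟨hx, ?_, ?_⟩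
      · refine hym.eq_of_not_lt fun hy => ?_
        have : v z < m := hc' z (by
          have : z ^ 3 = -(x ^ 3 + y ^ 3 + 4 * b) := by linear_combination e4
          rw [this, Valuation.map_neg]
          exact v.map_add_lt (v.map_add_lt (hc _ hx) (hc _ hy)) h4b)
        rcases hex with h | h | h
        · exact hx.ne h
        · exact hy.ne h
        · exact this.ne h
      · refine hzm.eq_of_not_lt fun hz => ?_
        have : v y < m := hc' y (by
          have : y ^ 3 = -(x ^ 3 + z ^ 3 + 4 * b) := by linear_combination e4
          rw [this, Valuation.map_neg]
          exact v.map_add_lt (v.map_add_lt (hc _ hx) (hc _ hz)) h4b)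
        rcases hex with h | h | h
        · exact hx.ne h
        · exact this.ne h
        · exact hz.ne h
    · left
      have hy : v y < m := by
        refine lt_of_le_of_ne hym fun h => ?_
        rw [hx, h, pow_two] at hxy
        exact lt_irrefl _ hxy
      refine ⟨hx, hy, hzm.eq_of_not_lt fun hz => ?_⟩
      have : v x < m := hc' x (by
          have : x ^ 3 = -(y ^ 3 + z ^ 3 + 4 * b) := by linear_combination e4
          rw [this, Valuation.map_neg]
          exact v.map_add_lt (v.map_add_lt (hc _ hy) (hc _ hz)) h4b)
      exact this.ne hx
  rcases hcases with ⟨hx, hy, hz⟩ | ⟨hx, hy, hz⟩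
  · rw [hx] at q1
    have hq : m < v Q := by
      by_contra h
      have : v Q * v y < m ^ 2 := by
        calc v Q * v y ≤ m * v y := by gcongr; exact not_lt.1 h
          _ < m * m := by gcongr
          _ = m ^ 2 := (pow_two m).symm
      exact this.ne q1.symm
    have hq2 : v Q = v t * v y * m := by
      have h1 : v (3 * b) < v (Q ^ 2) := by
        rw [v3b, map_pow]; exact one_lt_pow₀ (hm.trans hq) (by norm_num)
      have h3 : Q ^ 2 - 3 * b = e * t ^ 2 * y ^ 2 * z ^ 2 := by rw [e5]; ring
      have h4 := v.map_sub_eq_of_lt_left h1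
      rw [h3, vE, hz, map_pow, ← mul_pow, ← mul_pow] at h4
      exact ((pow_left_inj₀ zero_le zero_le (by norm_num)).1 h4).symm
    have hxt : v (x + t * z) = m := by
      rw [v.map_add_eq_of_lt_left, hx]
      rw [map_mul, hz, hx]
      exact mul_lt_of_lt_one_left hm0 ht
    have h : 2 * Q * (x + t * z) = 2 * e * t ^ 2 * y * z ^ 2 - 3 * y ^ 2 := by
      linear_combination e2
    have h1 := congrArg v h
    have h5 : v (2 * e * t ^ 2 * y * z ^ 2 - 3 * y ^ 2) < v Q * m := by
      refine v.map_sub_lt ?_ ?_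
      · have : v (2 * e * t ^ 2 * y * z ^ 2) = v t * (v Q * m) := by
          simp only [map_mul, map_pow, h2, he, hz, hq2, one_mul, pow_two]
          ac_rfl
        rw [this]
        exact mul_lt_of_lt_one_left (mul_pos (hm0.trans hq) hm0) ht
      · simp only [map_mul, map_pow, h3, one_mul]
        calc v y ^ 2 < m ^ 2 := pow_lt_pow_left₀ hy zero_le (by norm_num)
          _ = m * m := pow_two m
          _ < v Q * m := by gcongr
    rw [← h1] at h5
    simp [h2, hxt] at h5
  · rw [hy] at q1
    have hq : v Q < m := by
      have : v Q * m < m * m := by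
        rw [← q1, ← pow_two]; exact pow_lt_pow_left₀ hx zero_le (by norm_num)
      exact lt_of_mul_lt_mul_right this zero_le
    have hxt : v (x + t * z) ≤ m := by
      refine v.map_add_le hx.le ?_
      rw [map_mul, hz]
      exact mul_le_of_le_one_left zero_le ht.le
    have h : 3 * y ^ 2 + 2 * Q * (x + t * z) = 2 * e * t ^ 2 * y * z ^ 2 := by
      linear_combination e2
    have h1 : v (3 * y ^ 2 + 2 * Q * (x + t * z)) = m ^ 2 := by
      rw [v.map_add_eq_of_lt_left]
      · simp [h3, hy]
      · simp only [map_mul, map_pow, h3, h2, one_mul, hy]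
        calc v Q * v (x + t * z) ≤ v Q * m := by gcongr
          _ < m * m := by gcongr
          _ = m ^ 2 := (pow_two m).symm
    rw [h] at h1
    simp only [map_mul, map_pow, h2, he, hy, hz, one_mul] at h1
    have h6 : v (e * t ^ 2 * y ^ 2 * z ^ 2) = m ^ 3 := by
      rw [vE, hy, hz]
      calc v t ^ 2 * m ^ 2 * m ^ 2 = (v t ^ 2 * m * m ^ 2) * m := by
            simp only [pow_two]; ac_rfl
        _ = m ^ 3 := by rw [h1, ← pow_succ]
    have h7 := congrArg v e5
    rw [v.map_add_eq_of_lt_right (by rw [v3b, h6]; exact hm3), h6, map_pow] at h7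
    have : v Q ^ 2 < m ^ 2 := pow_lt_pow_left₀ hq zero_le (by norm_num)
    rw [h7] at this
    exact lt_asymm this hmmm

/-- The valuation-theoretic heart: no singular point over a valued field. -/
lemma core_no_singular (h2 : v 2 = 1) (h3 : v 3 = 1) {t c a b x y z w Q : L}
    (hc : v c = 1) (ha : v a = 1) (ht : v t < 1) (ht0 : t ≠ 0)
    (hab : v (27 - 16 * a) = 1 ∨ (27 - 16 * a = 0 ∧ v (1 - a) = 1))
    (hb : b = t + a * (1 - t))
    (hQ : Q = t * z ^ 2 + x * y + t * y * z)
    (e1 : 3 * w * x ^ 2 + 2 * Q * y = 0)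
    (e2 : 3 * w * y ^ 2 + 2 * Q * (x + t * z) - 2 * ((c - t) * t ^ 2) * y * z ^ 2 = 0)
    (e3 : 3 * w * z ^ 2 + 2 * t * Q * (2 * z + y) - 2 * ((c - t) * t ^ 2) * y ^ 2 * z = 0)
    (e4 : x ^ 3 + y ^ 3 + z ^ 3 + 4 * b * w ^ 3 = 0)
    (e5 : w * (x ^ 3 + y ^ 3 + z ^ 3 + b * w ^ 3) + Q ^ 2 - (c - t) * t ^ 2 * y ^ 2 * z ^ 2 = 0) :
    x = 0 ∧ y = 0 ∧ z = 0 ∧ w = 0 := by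
  have n2 : (2 : L) ≠ 0 := by rintro h; rw [h] at h2; simp at h2
  have vct : v (c - t) = 1 := by
    rw [v.map_sub_eq_of_lt_left (by rwa [hc]), hc]
  have nct : c - t ≠ 0 := by intro h; rw [h] at vct; simp at vct
  by_cases hw : w = 0
  · subst hw
    have hQy : Q = 0 ∨ y = 0 := by
      have : 2 * (Q * y) = 0 := by linear_combination e1
      simpa [n2] using this
    have hQ0 : Q = 0 := by
      rcases hQy with h | h
      · exact h
      · subst h
        have : Q ^ 2 = 0 := by linear_combination e5
        simpa using this
    rw [hQ0] at e2 e5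
    have hyz : y = 0 ∨ z = 0 := by
      have : (c - t) * t ^ 2 * (y ^ 2 * z ^ 2) = 0 := by linear_combination -e5
      simpa [nct, ht0] using this
    rcases hyz with rfl | rfl
    · have hz : z = 0 := by
        have : t * z ^ 2 = 0 := by linear_combination hQ0 - hQ
        simpa [ht0] using this
      subst hz
      have : x ^ 3 = 0 := by linear_combination e4
      simpa using this
    · have hxy : x = 0 ∨ y = 0 := by
        have : x * y = 0 := by linear_combination hQ0 - hQ
        simpa using this
      rcases hxy with rfl | rfl
      · have : y ^ 3 = 0 := by linear_combination e4
        simpa using this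
      · have : x ^ 3 = 0 := by linear_combination e4
        simpa using this
  · exfalso
    have vb : v b = 1 := by
      have : b = a + t * (1 - a) := by rw [hb]; ring
      rw [this, v.map_add_eq_of_lt_left, ha]
      rw [ha, map_mul]
      calc v t * v (1 - a) ≤ v t * 1 := by
            gcongr
            exact v.map_sub_le (by simp) ha.le
        _ < 1 := by simpa
    have hQ' : Q / w ^ 2 = t * (z / w) ^ 2 + x / w * (y / w) + t * (y / w) * (z / w) := by
      rw [hQ]; field_simp
    have e1' : 3 * (x / w) ^ 2 + 2 * (Q / w ^ 2) * (y / w) = 0 := by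
      field_simp; linear_combination e1
    have e2' : 3 * (y / w) ^ 2 + 2 * (Q / w ^ 2) * (x / w + t * (z / w))
        - 2 * (c - t) * t ^ 2 * (y / w) * (z / w) ^ 2 = 0 := by
      field_simp; linear_combination e2
    have e3' : 3 * (z / w) ^ 2 + 2 * t * (Q / w ^ 2) * (2 * (z / w) + y / w)
        - 2 * (c - t) * t ^ 2 * (y / w) ^ 2 * (z / w) = 0 := by
      field_simp; linear_combination e3
    have e4' : (x / w) ^ 3 + (y / w) ^ 3 + (z / w) ^ 3 + 4 * b = 0 := by
      field_simp; linear_combination e4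
    have e5' : (Q / w ^ 2) ^ 2 = 3 * b + (c - t) * t ^ 2 * (y / w) ^ 2 * (z / w) ^ 2 := by
      field_simp; linear_combination e5 - w * e4
    obtain ⟨hx, hy, hz⟩ := core_nonintegral v h2 h3 vct vb ht hQ' e1' e2' e4' e5'
    have key := core_integral v h2 h3 vct vb ht hx hy hz hQ' e1' e2' e3' e5'
    have v16 : v 16 = 1 := by
      have : (16 : L) = 2 ^ 4 := by norm_num
      rw [this]; simp [h2]
    have vt0 : 0 < v t := by simpa [zero_lt_iff] using ht0
    have hs : 27 - 16 * b = (27 - 16 * a) - 16 * (t * (1 - a)) := by rw [hb]; ring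
    rcases hab with h | ⟨h, h'⟩
    · have : v (27 - 16 * b) = 1 := by
        rw [hs, v.map_sub_eq_of_lt_left, h]
        rw [h, map_mul, map_mul, v16, one_mul]
        calc v t * v (1 - a) ≤ v t * 1 := by
              gcongr
              exact v.map_sub_le (by simp) ha.le
          _ < 1 := by simpa
      rw [this, one_pow] at key
      exact absurd (pow_lt_one₀ zero_le ht (by norm_num)) (not_lt.2 key)
    · rw [hs, h, zero_sub, Valuation.map_neg, map_mul, map_mul, v16, h', one_mul, mul_one] at key
      exact absurd (pow_lt_pow_right_of_lt_one₀ vt0 ht (by norm_num : 2 < 3)) (not_lt.2 key)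

end core

lemma taylor_one {K : Type*} [CommRing K] {σ : Type*} [Fintype σ] {B : Type*} [CommRing B]
    [Algebra K B] (x δ : σ → B) (hδ : ∀ i j, δ i * δ j = 0) (f : MvPolynomial σ K) :
    aeval (fun j => x j + δ j) f = aeval x f + ∑ j, aeval x (pderiv j f) * δ j := by
  classical
  induction f using MvPolynomial.induction_on with
  | C r => simp
  | add f g hf hg =>
    simp only [map_add, hf, hg, add_mul, Finset.sum_add_distrib]; ring
  | mul_X f n hf =>
    have h0 : (∑ j, aeval x (pderiv j f) * δ j) * δ n = 0 := by
      rw [Finset.sum_mul]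
      exact Finset.sum_eq_zero fun j _ => by rw [mul_assoc, hδ, mul_zero]
    have h1 : ∑ j, aeval x (pderiv j (f * X n)) * δ j =
        (∑ j, aeval x (pderiv j f) * δ j) * x n + aeval x f * δ n := by
      simp only [Derivation.leibniz, smul_eq_mul, map_add, map_mul, aeval_X, add_mul,
        Finset.sum_add_distrib, pderiv_X, Pi.single_apply]
      rw [add_comm, Finset.sum_mul]
      congr 1
      · exact Finset.sum_congr rfl fun j _ => by ring
      · rw [Finset.sum_eq_single n] <;> simp +contextual [eq_comm]
    rw [map_mul, hf, aeval_X, h1, map_mul, aeval_X]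
    linear_combination h0

lemma smooth_of_jac {K : Type*} [Field K] {σ : Type*} [Fintype σ] [DecidableEq σ]
    (F : MvPolynomial σ K) (i : σ) (g : σ → MvPolynomial σ K)
    (hg : ∑ j ∈ Finset.univ.erase i, g j * pderiv j F - 1 ∈ Ideal.span {F, X i - 1}) :
    Algebra.Smooth K (MvPolynomial σ K ⧸ Ideal.span {F, X i - 1}) := by
  set I : Ideal (MvPolynomial σ K) := Ideal.span {F, X i - 1} with hI
  have hFI : F ∈ I := Ideal.subset_span (by simp)
  have hXI : X i - 1 ∈ I := Ideal.subset_span (by simp)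
  have hker : RingHom.ker (Ideal.Quotient.mkₐ K I).toRingHom = I := Ideal.Quotient.mkₐ_ker K I
  let Q := MvPolynomial σ K ⧸ RingHom.ker (Ideal.Quotient.mkₐ K I).toRingHom ^ 2
  let q : MvPolynomial σ K →ₐ[K] Q := Ideal.Quotient.mkₐ K _
  have hq : ∀ r s, r ∈ I → s ∈ I → q r * q s = 0 := by
    intro r s hr hs
    rw [← map_mul]
    refine Ideal.Quotient.eq_zero_iff_mem.2 ?_
    rw [hker, pow_two]
    exact Ideal.mul_mem_mul hr hs
  let d : σ → MvPolynomial σ K := fun j => if j = i then -(X i - 1) else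
    - (g j * (F - pderiv i F * (X i - 1)))
  have hd : ∀ j, d j ∈ I := by
    intro j
    simp only [d]
    split_ifs
    · exact neg_mem hXI
    · exact neg_mem (I.mul_mem_left _ (sub_mem hFI (I.mul_mem_left _ hXI)))
  let φ : MvPolynomial σ K →ₐ[K] Q := aeval (fun j => q (X j) + q (d j))
  have hqa : ∀ f, aeval (fun j => q (X j)) f = q f := by
    intro f
    have : (aeval (fun j => q (X j))) = q := by ext; simp
    rw [this]
  have hφ : ∀ f, φ f = q f + ∑ j, q (pderiv j f) * q (d j) := by
    intro f
    have := taylor_one (K := K) (fun j => q (X j)) (fun j => q (d j))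
      (fun a b => hq _ _ (hd a) (hd b)) f
    simpa only [hqa] using this
  have hφX : φ (X i - 1) = 0 := by
    have : d i = -(X i - 1) := by simp [d]
    simp only [φ, map_sub, aeval_X, map_one, this, map_neg]
    ring
  have hφF : φ F = 0 := by
    rw [hφ, ← Finset.add_sum_erase _ _ (Finset.mem_univ i)]
    have hdi : d i = -(X i - 1) := by simp [d]
    have h1 : ∑ j ∈ Finset.univ.erase i, q (pderiv j F) * q (d j) =
        - (q (∑ j ∈ Finset.univ.erase i, g j * pderiv j F)
          * q (F - pderiv i F * (X i - 1))) := by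
      rw [map_sum, Finset.sum_mul, ← Finset.sum_neg_distrib]
      refine Finset.sum_congr rfl fun j hj => ?_
      have : d j = - (g j * (F - pderiv i F * (X i - 1))) := by
        simp [d, (Finset.mem_erase.1 hj).1]
      rw [this, map_neg, map_mul, map_mul]; ring
    have h2 := hq _ _ hg (sub_mem hFI (I.mul_mem_left (pderiv i F) hXI))
    rw [h1, hdi]
    simp only [map_sub, map_mul, map_neg, map_one] at h2 ⊢
    linear_combination -h2
  have hφI : ∀ r, r ∈ I → φ r = 0 := by
    intro r hr
    have : I ≤ RingHom.ker φ := by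
      refine Ideal.span_le.2 ?_
      rintro s (rfl | rfl)
      · exact hφF
      · exact hφX
    exact this hr
  refine ⟨?_, ?_⟩
  · refine Algebra.FormallySmooth.of_split (Ideal.Quotient.mkₐ K I)
      (Ideal.Quotient.liftₐ I φ hφI) ?_
    refine Ideal.Quotient.algHom_ext _ (MvPolynomial.algHom_ext fun j => ?_)
    have hdj : (Ideal.Quotient.mk I) (d j) = 0 := Ideal.Quotient.eq_zero_iff_mem.2 (hd j)
    have : φ (X j) = q (X j + d j) := by simp [φ]
    change (Ideal.Quotient.mkₐ K I).kerSquareLift (φ (X j)) = Ideal.Quotient.mk I (X j)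
    rw [this]
    change Ideal.Quotient.mk I (X j + d j) = _
    rw [map_add, hdj, add_zero]
  · exact Algebra.FinitePresentation.quotient (by
      rw [hI]; exact Submodule.fg_span (by simp))

lemma smooth_of_points {K : Type} [Field K] (F : MvPolynomial (Fin 4) K) (i : Fin 4)
    (h : ∀ (L : Type) [Field L] [Algebra K L] (x : Fin 4 → L), aeval x F = 0 → x i = 1 →
      (∀ j, j ≠ i → aeval x (pderiv j F) = 0) → False) :
    Algebra.Smooth K (MvPolynomial (Fin 4) K ⧸ Ideal.span {F, X i - 1}) := by
  classical
  set I : Ideal (MvPolynomial (Fin 4) K) := Ideal.span {F, X i - 1} with hI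
  have htop : Ideal.span ((fun j => pderiv j F) '' (Finset.univ.erase i : Finset (Fin 4))) ⊔ I
      = ⊤ := by
    by_contra hne
    obtain ⟨M, hM, hle⟩ := Ideal.exists_le_maximal _ hne
    let _ : Field (MvPolynomial (Fin 4) K ⧸ M) := Ideal.Quotient.field M
    have ev : ∀ f : MvPolynomial (Fin 4) K,
        aeval (fun j => Ideal.Quotient.mk M (X j)) f = Ideal.Quotient.mk M f := by
      intro f
      have : (aeval (fun j => Ideal.Quotient.mk M (X j))) = Ideal.Quotient.mkₐ K M := by
        ext; simp
      rw [this]; rfl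
    refine h (MvPolynomial (Fin 4) K ⧸ M) (fun j => Ideal.Quotient.mk M (X j)) ?_ ?_ ?_
    · rw [ev]
      exact Ideal.Quotient.eq_zero_iff_mem.2 (hle (Ideal.mem_sup_right
        (Ideal.subset_span (by simp))))
    · rw [← sub_eq_zero, ← map_one (Ideal.Quotient.mk M), ← map_sub]
      exact Ideal.Quotient.eq_zero_iff_mem.2 (hle (Ideal.mem_sup_right
        (Ideal.subset_span (by simp))))
    · intro j hj
      rw [ev]
      exact Ideal.Quotient.eq_zero_iff_mem.2 (hle (Ideal.mem_sup_left
        (Ideal.subset_span ⟨j, by simpa using hj, rfl⟩)))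
  obtain ⟨s, hs, r, hr, hsr⟩ := Submodule.mem_sup.1 ((Ideal.eq_top_iff_one _).1 htop)
  obtain ⟨g, hg⟩ := (Submodule.mem_span_image_finset_iff_exists_fun _).1 hs
  let g' : Fin 4 → MvPolynomial (Fin 4) K :=
    fun j => if h : j ∈ Finset.univ.erase i then g ⟨j, h⟩ else 0
  refine smooth_of_jac F i g' ?_
  have h1 : ∑ j ∈ Finset.univ.erase i, g' j * pderiv j F = s := by
    rw [← hg, ← Finset.sum_coe_sort]
    refine Finset.sum_congr rfl fun j _ => ?_
    have : g' j = g j := dif_pos j.2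
    rw [this, smul_eq_mul]
  have : ∑ j ∈ Finset.univ.erase i, g' j * pderiv j F - 1 = -r := by
    rw [h1, ← hsr]; ring
  rw [this]
  exact neg_mem hr

lemma no_singular_point
    (p : ℕ) [Fact p.Prime] (hp : 5 ≤ p)
    (L : Type) [Field L] (f : PowerSeries (ZMod p) →+* L) (hf : Function.Injective f)
    (c : ZMod p) (hc0 : c ≠ 0)
    (a : ZMod p) (ha0 : a ≠ 0) (ha : 27 * a ≠ 16) {t x y z w Q : L}
    (ht : t = f PowerSeries.X)
    (hQ : Q = t * z ^ 2 + x * y + t * y * z)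
    (e1 : 3 * w * x ^ 2 + 2 * Q * y = 0)
    (e2 : 3 * w * y ^ 2 + 2 * Q * (x + t * z)
      - 2 * ((f (PowerSeries.C c) - t) * t ^ 2) * y * z ^ 2 = 0)
    (e3 : 3 * w * z ^ 2 + 2 * t * Q * (2 * z + y)
      - 2 * ((f (PowerSeries.C c) - t) * t ^ 2) * y ^ 2 * z = 0)
    (e4 : x ^ 3 + y ^ 3 + z ^ 3 + 4 * (t + f (PowerSeries.C a) * (1 - t)) * w ^ 3 = 0)
    (e5 : w * (x ^ 3 + y ^ 3 + z ^ 3 + (t + f (PowerSeries.C a) * (1 - t)) * w ^ 3) + Q ^ 2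
      - (f (PowerSeries.C c) - t) * t ^ 2 * y ^ 2 * z ^ 2 = 0) :
    x = 0 ∧ y = 0 ∧ z = 0 ∧ w = 0 := by
  obtain ⟨A, hA, hloc⟩ := IsLocalRing.exists_factor_valuationRing f
  have hv : ∀ r : ZMod p, r ≠ 0 → A.valuation (f (PowerSeries.C r)) = 1 := by
    intro r hr
    have hu : IsUnit (PowerSeries.C r : PowerSeries (ZMod p)) := (IsUnit.mk0 r hr).map _
    exact (A.valuation_eq_one_iff ⟨_, hA _⟩).1 (hu.map (f.codRestrict A.toSubring hA))
  have hnat : ∀ n : ℕ, f (PowerSeries.C (n : ZMod p)) = n := by intro n; simp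
  have h2 : A.valuation 2 = 1 := by
    have := hv (2 : ℕ) (by
      rw [Ne, ZMod.natCast_eq_zero_iff]
      exact fun h => by have := Nat.le_of_dvd (by norm_num) h; omega)
    rw [hnat] at this
    exact_mod_cast this
  have h3 : A.valuation 3 = 1 := by
    have := hv (3 : ℕ) (by
      rw [Ne, ZMod.natCast_eq_zero_iff]
      exact fun h => by have := Nat.le_of_dvd (by norm_num) h; omega)
    rw [hnat] at this
    exact_mod_cast this
  have ht1 : A.valuation t < 1 := by
    have hle : A.valuation t ≤ 1 := by rw [ht]; exact A.valuation_le_one ⟨_, hA _⟩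
    refine lt_of_le_of_ne hle fun h => ?_
    rw [ht] at h
    have hu := (A.valuation_eq_one_iff ⟨_, hA PowerSeries.X⟩).2 h
    have : IsUnit (PowerSeries.X : PowerSeries (ZMod p)) := hloc.map_nonunit _ hu
    exact PowerSeries.X_prime.not_isUnit this
  have ht0 : t ≠ 0 := by
    rw [ht, Ne, map_eq_zero_iff f hf]; exact PowerSeries.X_ne_zero
  have hab : A.valuation (27 - 16 * f (PowerSeries.C a)) = 1 ∨
      (27 - 16 * f (PowerSeries.C a) = 0 ∧ A.valuation (1 - f (PowerSeries.C a)) = 1) := by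
    have e : (27 - 16 * f (PowerSeries.C a)) = f (PowerSeries.C (27 - 16 * a)) := by
      simp only [map_sub, map_mul]
      rw [map_ofNat, map_ofNat, map_ofNat, map_ofNat]
    by_cases h : 27 - 16 * a = 0
    · right
      refine ⟨by rw [e, h]; simp, ?_⟩
      have e' : (1 - f (PowerSeries.C a)) = f (PowerSeries.C (1 - a)) := by simp
      rw [e']
      refine hv _ fun h' => ha ?_
      linear_combination h - 43 * h'
    · left
      rw [e]; exact hv _ h
  exact core_no_singular A.valuation h2 h3 (hv c hc0) (hv a ha0) ht1 ht0 hab rfl hQ e1 e2 e3 e4 e5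

theorem quartic_smooth_over_laurent_series
    (p : ℕ) [Fact p.Prime] (hp : 5 ≤ p)
    (K : Type) [Field K] [Algebra (PowerSeries (ZMod p)) K]
    [IsFractionRing (PowerSeries (ZMod p)) K]
    (c : ZMod p) (hc0 : c ≠ 0) (hc : ¬ IsSquare c)
    (a : ZMod p) (ha0 : a ≠ 0) (ha : 27 * a ≠ 16)
    (i : Fin 4) :
    Algebra.Smooth K
      (MvPolynomial (Fin 4) K ⧸ Ideal.span {FquarticK p K c a, X i - 1}) := by
  refine smooth_of_points _ i ?_
  intro L _ _ x hF hi hd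
  let f : PowerSeries (ZMod p) →+* L := (algebraMap K L).comp (algebraMap (PowerSeries (ZMod p)) K)
  have hf : Function.Injective f :=
    (algebraMap K L).injective.comp (IsFractionRing.injective (PowerSeries (ZMod p)) K)
  have hfd : ∀ s, algebraMap K L (algebraMap (PowerSeries (ZMod p)) K s) = f s := fun s => rfl
  have hFK : FquarticK p K c a =
      X 3 * (X 0 ^ 3 + X 1 ^ 3 + X 2 ^ 3 +
      C (algebraMap (PowerSeries (ZMod p)) K (PowerSeries.X + PowerSeries.C a * (1 - PowerSeries.X))) * X 3 ^ 3) +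
      (C (algebraMap (PowerSeries (ZMod p)) K PowerSeries.X) * X 2 ^ 2 + X 0 * X 1
        + C (algebraMap (PowerSeries (ZMod p)) K PowerSeries.X) * X 1 * X 2) ^ 2 -
      C (algebraMap (PowerSeries (ZMod p)) K ((PowerSeries.C c - PowerSeries.X) * PowerSeries.X ^ 2))
        * X 1 ^ 2 * X 2 ^ 2 := by
    simp [FquarticK, Fquartic]
  obtain ⟨t, ht⟩ : ∃ t, t = f PowerSeries.X := ⟨_, rfl⟩
  obtain ⟨Q, hQ⟩ : ∃ Q, Q = t * x 2 ^ 2 + x 0 * x 1 + t * x 1 * x 2 := ⟨_, rfl⟩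
  have e5 : x 3 * (x 0 ^ 3 + x 1 ^ 3 + x 2 ^ 3 + (t + f (PowerSeries.C a) * (1 - t)) * x 3 ^ 3)
      + Q ^ 2 - (f (PowerSeries.C c) - t) * t ^ 2 * x 1 ^ 2 * x 2 ^ 2 = 0 := by
    rw [hFK] at hF
    simp only [map_add, map_sub, map_mul, map_pow, map_one, aeval_X, aeval_C, hfd, ← ht] at hF
    rw [hQ, ← hF]
  have d0 : aeval x (pderiv 0 (FquarticK p K c a)) = 3 * x 3 * x 0 ^ 2 + 2 * Q * x 1 := by
    rw [hFK, hQ]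
    simp [pderiv_X, Pi.single_apply, Derivation.leibniz_pow, hfd, ← ht]
    ring
  have d1 : aeval x (pderiv 1 (FquarticK p K c a)) = 3 * x 3 * x 1 ^ 2 + 2 * Q * (x 0 + t * x 2)
      - 2 * ((f (PowerSeries.C c) - t) * t ^ 2) * x 1 * x 2 ^ 2 := by
    rw [hFK, hQ]
    simp [pderiv_X, Pi.single_apply, Derivation.leibniz_pow, hfd, ← ht]
    ring
  have d2 : aeval x (pderiv 2 (FquarticK p K c a)) = 3 * x 3 * x 2 ^ 2
      + 2 * t * Q * (2 * x 2 + x 1)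
      - 2 * ((f (PowerSeries.C c) - t) * t ^ 2) * x 1 ^ 2 * x 2 := by
    rw [hFK, hQ]
    simp [pderiv_X, Pi.single_apply, Derivation.leibniz_pow, hfd, ← ht]
    ring
  have d3 : aeval x (pderiv 3 (FquarticK p K c a)) = x 0 ^ 3 + x 1 ^ 3 + x 2 ^ 3
      + 4 * (t + f (PowerSeries.C a) * (1 - t)) * x 3 ^ 3 := by
    rw [hFK]
    simp [pderiv_X, Pi.single_apply, Derivation.leibniz_pow, hfd, ← ht]
    ring
  have hall : ∀ j, aeval x (pderiv j (FquarticK p K c a)) = 0 := by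
    have euler : ∑ j, x j * aeval x (pderiv j (FquarticK p K c a)) = 0 := by
      rw [Fin.sum_univ_four, d0, d1, d2, d3]
      linear_combination 4 * e5 - 4 * Q * hQ
    intro j
    by_cases hj : j = i
    · subst hj
      rw [Finset.sum_eq_single j (fun k _ hk => by rw [hd k hk, mul_zero]) (by simp), hi,
        one_mul] at euler
      exact euler
    · exact hd j hj
  obtain ⟨h0, h1, h2, h3⟩ := no_singular_point p hp L f hf c hc0 a ha0 ha ht hQ
    (d0 ▸ hall 0) (d1 ▸ hall 1) (d2 ▸ hall 2) (d3 ▸ hall 3) e5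
  have : x i = 0 := by fin_cases i <;> assumption
  rw [hi] at this
  exact one_ne_zero this

end
end
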